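/- For each u ∈ ℂ with |u| ≤ u_c, the function Z_u(v) := Σ_{q≥0} (Σ_{p≥0} z_{p,q}·u^p)·v^q extends analytically to a slit disk at u_c, and there exist complex constants α(u), β(u) such that, as v → u_c within this slit disk, Z_u(v) = α(u) − β(u)·(u_c − v) + A(u)·(1 − v/u_c)^{4/3} + O((1 − v/u_c)^{5/3}), where the fractional powers are taken with the principal branch and A(u) = Σ_{p≥0} a_p·u^p. -/

import Mathlib

noncomputable def nuc : ℝ := 1 + 2 * Real.sqrt 7

noncomputable def tc : ℝ := Real.sqrt 10 / (8 * (7 + Real.sqrt 7) ^ ((3:ℝ)/2))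

noncomputable def uc : ℝ := (6/5) * (7 + Real.sqrt 7) * tc

/-- The rational parametrization `û` of the `u`-variable. -/
noncomputable def uhat (H : ℂ) : ℂ :=
  ((uc : ℂ) / 3) * H * (10 - 12 * H + 6 * H ^ 2 - H ^ 3)

/-- The rational parametrization `Ẑ₀`. -/
noncomputable def Z0hat (H : ℂ) : ℂ :=
  (1/10) * (1 - (1 - (Real.sqrt 7 : ℂ)) * H + 3 * H ^ 2 - H ^ 3)
    * (10 - 12 * H + 6 * H ^ 2 - H ^ 3)

/-- The rational parametrization `Ẑ₁`. -/
noncomputable def Z1hat (H : ℂ) : ℂ :=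
  (3 / (10 * (uc : ℂ))) *
    ((Real.sqrt 7 : ℂ) - 1 + H - 3 * (4 - 3 * H + H ^ 2) / (10 - 12 * H + 6 * H ^ 2 - H ^ 3))

/-- The rational parametrization `Â`. -/
noncomputable def Ahat (H : ℂ) : ℂ :=
  (1/10) * ((((3:ℝ)/2) ^ ((7:ℝ)/3) : ℝ) : ℂ) * (9 - 8 * H + 3 * H ^ 2) / (3 - 3 * H + H ^ 2) ^ 2

/-- The slit disk at `x > 0` of margin `ε > 0`. -/
def slitDisk (x ε : ℝ) : Set ℂ :=
  Metric.ball (0 : ℂ) (x + ε) \ (Complex.ofReal '' Set.Icc x (x + ε))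

open Filter Topology

/-- The quartic `h ↦ h³(2 + h)/3`, which is `1 - û(1 - h)/u_c`. -/
noncomputable def quartic (h : ℂ) : ℂ := h ^ 3 * (2 + h) / 3

/-- The open sector of half-angle `π/6` around the positive real axis. -/
def sector : Set ℂ := {h | 0 < h.re ∧ 3 * h.im ^ 2 < h.re ^ 2}

theorem quartic_re (h : ℂ) : (quartic h).re =
    ((h.re ^ 3 - 3 * h.re * h.im ^ 2) * (2 + h.re)
      - (3 * h.re ^ 2 * h.im - h.im ^ 3) * h.im) / 3 := by
  have : quartic h = ((h ^ 3 * (2 + h)) / (3 : ℝ) : ℂ) := by simp [quartic]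
  rw [this, Complex.div_ofReal_re]
  simp [pow_succ]
  ring

theorem hasDerivAt_quartic (h : ℂ) : HasDerivAt quartic (2 * h ^ 2 * (3 + 2 * h) / 3) h := by
  have := (((hasDerivAt_id h).pow 3).mul ((hasDerivAt_id h).const_add 2)).div_const 3
  refine this.congr_deriv ?_
  simp
  ring

/-- A continuous right inverse of the quartic on the slit plane, fixing `1` and `0`. -/
structure IsQuarticBranch (κ : ℂ → ℂ) : Prop where
  continuousOn : ContinuousOn κ Complex.slitPlane
  quartic_apply : ∀ y ∈ Complex.slitPlane, quartic (κ y) = y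
  map_one : κ 1 = 1
  map_zero : κ 0 = 0

/-- The critical values `0` and `-9/16` of the quartic lie outside the slit plane, over which
it is therefore a covering map. -/
theorem exists_isQuarticBranch : ∃ κ : ℂ → ℂ, IsQuarticBranch κ := by
  classical
  let p : Polynomial ℂ := Polynomial.C (1 / 3) * (Polynomial.X ^ 3 * (2 + Polynomial.X))
  have hp : ∀ h, p.eval h = quartic h := fun h => by simp [p, quartic]; ring
  have hp' : ∀ h, p.derivative.eval h = 2 * h ^ 2 * (3 + 2 * h) / 3 := fun h => by
    rw [← Polynomial.deriv, ← (hasDerivAt_quartic h).deriv]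
    congr 1
    exact funext hp
  have hcov : IsCoveringMapOn p.eval Complex.slitPlane := by
    refine p.isCoveringMapOn_eval.mono fun y hy => ?_
    rintro ⟨h, hh, rfl⟩
    have hh' : 2 * h ^ 2 * (3 + 2 * h) / 3 = 0 := by rw [← hp']; exact hh
    have : h = 0 ∨ h = ((-3 / 2 : ℝ) : ℂ) := by
      rcases eq_or_ne h 0 with h0 | h0
      · exact Or.inl h0
      · right
        have h1 : 3 + 2 * h = 0 := by simpa [h0] using hh'
        push_cast
        linear_combination h1 / 2
    replace hy : p.eval h ∈ Complex.slitPlane := hy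
    rw [hp, quartic] at hy
    rcases this with rfl | rfl
    · simp at hy
    · have : (((-3 / 2 : ℝ) : ℂ) ^ 3 * (2 + ((-3 / 2 : ℝ) : ℂ)) / 3) = ((-9 / 16 : ℝ) : ℂ) := by
        push_cast; norm_num
      rw [this, Complex.ofReal_mem_slitPlane] at hy
      norm_num at hy
  have hc := Complex.starConvex_one_slitPlane.contractibleSpace ⟨1, Complex.one_mem_slitPlane⟩
  have hl := Complex.isOpen_slitPlane.locallyPathConnectedSpace
  obtain ⟨f, ⟨hf1, hf⟩, -⟩ := hcov.existsUnique_continuousMap_lifts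
    (A := Complex.slitPlane) ⟨Subtype.val, continuous_subtype_val⟩
    (a₀ := ⟨1, Complex.one_mem_slitPlane⟩) (e₀ := 1)
    (by simp [hp, quartic]; norm_num) (fun a => a.2)
  obtain ⟨κ, hκ, hκ0⟩ : ∃ κ : ℂ → ℂ, (∀ z : Complex.slitPlane, κ z = f z) ∧ κ 0 = 0 :=
    ⟨fun z => if hz : z ∈ Complex.slitPlane then f ⟨z, hz⟩ else 0, by simp, by simp⟩
  refine ⟨κ, ?_, fun y hy => ?_, ?_, hκ0⟩
  · rw [continuousOn_iff_continuous_domRestrict]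
    convert! map_continuous f
    ext z
    exact hκ z
  · rw [hκ ⟨y, hy⟩, ← hp]
    exact congrFun hf ⟨y, hy⟩
  · exact (hκ ⟨1, Complex.one_mem_slitPlane⟩).trans hf1

theorem isPreconnected_slitPlane : IsPreconnected Complex.slitPlane :=
  (Complex.starConvex_one_slitPlane.isPathConnected
    Complex.one_mem_slitPlane).isConnected.isPreconnected

namespace IsQuarticBranch

variable {κ : ℂ → ℂ}

theorem mem_sector (hκ : IsQuarticBranch κ) {y : ℂ} (hy : 0 < y.re) : κ y ∈ sector := by
  have hpre : IsPreconnected (κ '' {y : ℂ | 0 < y.re}) :=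
    (convex_halfSpace_re_gt 0).isPreconnected.image κ (hκ.continuousOn.mono fun y hy => Or.inl hy)
  have hopen : IsOpen sector :=
    (isOpen_lt (f := fun _ : ℂ => (0 : ℝ)) (g := fun h => h.re) (by fun_prop) (by fun_prop)).inter
      (isOpen_lt (f := fun h : ℂ => 3 * h.im ^ 2) (g := fun h => h.re ^ 2)
        (by fun_prop) (by fun_prop))
  have hopen' : IsOpen {h : ℂ | h.re < 0 ∨ h.re ^ 2 < 3 * h.im ^ 2} :=
    (isOpen_lt (f := fun h : ℂ => h.re) (g := fun _ => (0 : ℝ)) (by fun_prop) (by fun_prop)).union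
      (isOpen_lt (f := fun h : ℂ => h.re ^ 2) (g := fun h => 3 * h.im ^ 2)
        (by fun_prop) (by fun_prop))
  refine hpre.subset_left_of_subset_union hopen hopen' ?_ ?_ ?_ ⟨y, hy, rfl⟩
  · rw [Set.disjoint_left]
    rintro h ⟨h1, h2⟩ (h3 | h3) <;> linarith
  · rintro _ ⟨w, hw, rfl⟩
    have hq := congrArg Complex.re (hκ.quartic_apply w (Or.inl hw))
    rw [quartic_re] at hq
    have hw' : 0 < w.re := hw
    by_contra hcon
    simp only [Set.mem_union, sector, Set.mem_ofPred_eq, not_or, not_and, not_lt] at hcon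
    obtain ⟨h2, h3, h4⟩ := hcon
    rcases h3.eq_or_lt with h3 | h3
    · rw [← h3] at h4 hq
      have : (κ w).im ^ 2 = 0 := by nlinarith [sq_nonneg (κ w).im]
      have : (κ w).im = 0 := by simpa using this
      rw [this] at hq
      norm_num at hq
      linarith
    · have h5 := le_antisymm (h2 h3) h4
      have h6 : (κ w).re ^ 3 - 3 * (κ w).re * (κ w).im ^ 2 = 0 := by
        linear_combination (κ w).re * h5
      have h7 : (3 * (κ w).re ^ 2 * (κ w).im - (κ w).im ^ 3) * (κ w).im
          = 8 * (κ w).im ^ 4 := by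
        linear_combination 3 * (κ w).im ^ 2 * h5
      rw [h6, h7] at hq
      have : 0 ≤ (κ w).im ^ 4 := by positivity
      linarith
  · exact ⟨1, ⟨1, by simp, hκ.map_one⟩, by simp [sector]⟩

theorem re_pos (hκ : IsQuarticBranch κ) {y : ℂ} (hy : y ∈ Complex.slitPlane) : 0 < (κ y).re := by
  have hpre : IsPreconnected (κ '' Complex.slitPlane) :=
    isPreconnected_slitPlane.image κ hκ.continuousOn
  have hsub : κ '' Complex.slitPlane ⊆ {h : ℂ | 0 < h.re} := by
    refine hpre.subset_left_of_subset_union (u := {h : ℂ | 0 < h.re})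
      (v := {h : ℂ | h.re < 0})
      (isOpen_lt continuous_const Complex.continuous_re)
      (isOpen_lt Complex.continuous_re continuous_const) ?_ ?_
      ⟨1, ⟨1, Complex.one_mem_slitPlane, hκ.map_one⟩, by simp⟩
    · rw [Set.disjoint_left]
      intro h h1 h2
      simp only [Set.mem_ofPred_eq] at h1 h2
      linarith
    · rintro _ ⟨w, hw, rfl⟩
      by_contra hcon
      simp only [Set.mem_union, Set.mem_ofPred_eq, not_or, not_lt] at hcon
      have h0 : (κ w).re = 0 := le_antisymm hcon.1 hcon.2
      have hq := congrArg Complex.re (hκ.quartic_apply w hw)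
      rw [quartic_re, h0] at hq
      have him : (κ w).im ≠ 0 := by
        intro him
        have : κ w = 0 := Complex.ext h0 him
        have h2 := hκ.quartic_apply w hw
        rw [this] at h2
        exact Complex.slitPlane_ne_zero hw (by rw [← h2]; simp [quartic])
      have hpos : 0 < (κ w).im ^ 4 := by positivity
      have hwre : 0 < w.re := by nlinarith
      have := (hκ.mem_sector hwre).1
      linarith
  exact hsub (Set.mem_image_of_mem κ hy)

theorem ne_zero (hκ : IsQuarticBranch κ) {y : ℂ} (hy : y ∈ Complex.slitPlane) : κ y ≠ 0 :=
  fun h => by simpa [h] using hκ.re_pos hy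

theorem norm_pow_three_le (hκ : IsQuarticBranch κ) {y : ℂ} (hy : y ∈ Complex.slitPlane) :
    ‖κ y‖ ^ 3 ≤ 3 / 2 * ‖y‖ := by
  have h2 : 2 ≤ ‖2 + κ y‖ := by
    have := Complex.re_le_norm (2 + κ y)
    have h3 := hκ.re_pos hy
    simp at this
    linarith
  have h3 : ‖y‖ = ‖κ y‖ ^ 3 * ‖2 + κ y‖ / 3 := by
    conv_lhs => rw [← hκ.quartic_apply y hy]
    simp [quartic]
  rw [h3]
  have : 0 ≤ ‖κ y‖ ^ 3 := by positivity
  nlinarith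

theorem differentiableOn (hκ : IsQuarticBranch κ) : DifferentiableOn ℂ κ Complex.slitPlane := by
  intro y hy
  have hpos := hκ.re_pos hy
  have hd : 2 * κ y ^ 2 * (3 + 2 * κ y) / 3 ≠ 0 := by
    have h0 := hκ.ne_zero hy
    have : 3 + 2 * κ y ≠ 0 := fun h => by
      have := congrArg Complex.re h
      simp at this
      linarith
    exact div_ne_zero (mul_ne_zero (mul_ne_zero two_ne_zero (pow_ne_zero 2 h0)) this) three_ne_zero
  exact (HasDerivAt.of_local_left_inverse
    (hκ.continuousOn.continuousAt (Complex.isOpen_slitPlane.mem_nhds hy))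
    (hasDerivAt_quartic (κ y)) hd (by
      filter_upwards [Complex.isOpen_slitPlane.mem_nhds hy] with w hw using hκ.quartic_apply w hw)
    ).differentiableAt.differentiableWithinAt

theorem cpow_third_eq (hκ : IsQuarticBranch κ) {y : ℂ} (hy : y ∈ Complex.slitPlane) :
    y ^ (1 / 3 : ℂ) = κ y * ((2 + κ y) / 3) ^ (1 / 3 : ℂ) := by
  have hmem : ∀ w ∈ Complex.slitPlane, (2 + κ w) / 3 ∈ Complex.slitPlane := fun w hw => by
    left
    have := hκ.re_pos hw
    have h3 : ((2 + κ w) / 3).re = (2 + (κ w).re) / 3 := by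
      have : (2 + κ w) / 3 = (2 + κ w) / (3 : ℝ) := by simp
      rw [this, Complex.div_ofReal_re]
      simp
    rw [h3]
    positivity
  have hcube : ∀ w : ℂ, (w ^ (1 / 3 : ℂ)) ^ 3 = w := fun w => by
    rw [← Complex.cpow_nat_mul]
    norm_num
  let f : ℂ → ℂ := fun w => κ w * ((2 + κ w) / 3) ^ (1 / 3 : ℂ) / w ^ (1 / 3 : ℂ)
  have hfc : ContinuousOn f Complex.slitPlane := by
    refine (hκ.continuousOn.mul ?_).div ?_ ?_
    · exact ContinuousOn.cpow_const ((hκ.continuousOn.const_add 2).div_const 3) hmem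
    · exact ContinuousOn.cpow_const continuousOn_id fun w hw => hw
    · intro w hw
      simp [Complex.cpow_eq_zero_iff, Complex.slitPlane_ne_zero hw]
  have hfin : {w : ℂ | w ^ 3 = 1}.Finite := by
    refine ((Polynomial.X ^ 3 - Polynomial.C 1 : Polynomial ℂ).roots.toFinset.finite_toSet).subset
      fun w hw => ?_
    have hne : (Polynomial.X ^ 3 - Polynomial.C 1 : Polynomial ℂ) ≠ 0 :=
      Polynomial.X_pow_sub_C_ne_zero (by norm_num) 1
    simp only [Finset.mem_coe, Multiset.mem_toFinset, Polynomial.mem_roots hne]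
    have : w ^ 3 = 1 := hw
    simp [this]
  have hmaps : Set.MapsTo f Complex.slitPlane {w : ℂ | w ^ 3 = 1} := fun w hw => by
    have h2 := hκ.quartic_apply w hw
    have : (κ w * ((2 + κ w) / 3) ^ (1 / 3 : ℂ)) ^ 3 = w := by
      rw [mul_pow, hcube]
      conv_rhs => rw [← h2, quartic]
      ring
    simp only [f, Set.mem_ofPred_eq, div_pow, this, hcube]
    exact div_self (Complex.slitPlane_ne_zero hw)
  have := isPreconnected_slitPlane.constant_of_mapsTo hfin.isDiscrete hfc hmaps hy
    Complex.one_mem_slitPlane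
  have hf1 : f 1 = 1 := by simp [f, hκ.map_one]; norm_num
  rw [hf1] at this
  have hne : y ^ (1 / 3 : ℂ) ≠ 0 := by
    simp [Complex.cpow_eq_zero_iff, Complex.slitPlane_ne_zero hy]
  exact ((div_eq_one_iff_eq hne).mp this).symm

end IsQuarticBranch

theorem hasFPowerSeriesAt_ofScalars {f : ℂ → ℂ} {c : ℕ → ℂ}
    (hc : ∀ᶠ w in 𝓝 (0 : ℂ), HasSum (fun n => c n * w ^ n) (f w)) :
    HasFPowerSeriesAt f (FormalMultilinearSeries.ofScalars ℂ c) 0 := by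
  rw [hasFPowerSeriesAt_iff]
  filter_upwards [hc] with w hw
  simpa [FormalMultilinearSeries.coeff_ofScalars, mul_comm] using hw

theorem hasSum_of_differentiableOn_ball {f : ℂ → ℂ} {c : ℕ → ℂ} {R : ℝ}
    (hf : DifferentiableOn ℂ f (Metric.ball 0 R))
    (hc : ∀ᶠ w in 𝓝 (0 : ℂ), HasSum (fun n => c n * w ^ n) (f w)) {w : ℂ} (hw : ‖w‖ < R) :
    HasSum (fun n => c n * w ^ n) (f w) := by
  have hR : 0 < R := (norm_nonneg w).trans_lt hw
  have hsub : Metric.ball (0 : ℂ) R ∈ 𝓝 0 := Metric.ball_mem_nhds _ hR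
  have hw' : w ∈ Metric.ball (0 : ℂ) R := by simpa using hw
  have ht : ∀ w ∈ Metric.ball (0 : ℂ) R,
      HasSum (fun n => (n.factorial : ℂ)⁻¹ * iteratedDeriv n f 0 * w ^ n) (f w) := fun w hw => by
    simpa [mul_comm, mul_left_comm] using Complex.hasSum_taylorSeries_on_ball hf hw
  have heq := (hasFPowerSeriesAt_ofScalars hc).eq_formalMultilinearSeries
    (hasFPowerSeriesAt_ofScalars (Filter.mem_of_superset hsub ht))
  have hcoeff : c = fun n => (n.factorial : ℂ)⁻¹ * iteratedDeriv n f 0 := by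
    funext n
    have := congrArg (fun p => FormalMultilinearSeries.coeff p n) heq
    simpa [FormalMultilinearSeries.coeff_ofScalars] using this
  rw [hcoeff]
  exact ht w hw'

theorem summable_mul_pow_of_continuousOn {f : ℂ → ℂ} {c : ℕ → ℝ} {R : ℝ} (hR : 0 < R)
    (hc : ∀ n, 0 ≤ c n) (hf : ContinuousOn f (Metric.closedBall 0 R))
    (hs : ∀ w : ℂ, ‖w‖ < R → HasSum (fun n => (c n : ℂ) * w ^ n) (f w)) :
    Summable fun n => c n * R ^ n := by
  obtain ⟨M, hM⟩ := (isCompact_closedBall (0 : ℂ) R).exists_bound_of_continuousOn hf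
  refine summable_of_sum_le (c := M) (fun n => mul_nonneg (hc n) (by positivity)) fun s => ?_
  have hcont : Tendsto (fun t : ℝ => ∑ n ∈ s, c n * t ^ n) (𝓝[<] R) (𝓝 (∑ n ∈ s, c n * R ^ n)) :=
    ((by fun_prop : Continuous fun t : ℝ => ∑ n ∈ s, c n * t ^ n).tendsto R).mono_left
      nhdsWithin_le_nhds
  refine le_of_tendsto hcont ?_
  filter_upwards [Ioo_mem_nhdsLT hR] with t ht
  have hnorm : ‖(t : ℂ)‖ = t := by simp [abs_of_pos ht.1]
  have h1 := hs t (by rw [hnorm]; exact ht.2)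
  have h2 : HasSum (fun n => c n * t ^ n) (f t).re := by
    refine (Complex.reCLM.hasSum h1).congr_fun fun n => ?_
    simp [← Complex.ofReal_pow, ← Complex.ofReal_mul]
  calc ∑ n ∈ s, c n * t ^ n ≤ (f t).re :=
        sum_le_hasSum s (fun n _ => mul_nonneg (hc n) (pow_nonneg ht.1.le n)) h2
    _ ≤ ‖f t‖ := Complex.re_le_norm _
    _ ≤ M := hM _ (by simpa [abs_of_pos ht.1] using ht.2.le)

theorem hasSum_of_continuousOn_closedBall {f : ℂ → ℂ} {c : ℕ → ℂ} {R : ℝ} (hR : 0 < R)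
    (hc : Summable fun n => ‖c n‖ * R ^ n) (hf : ContinuousOn f (Metric.closedBall 0 R))
    (hs : ∀ w : ℂ, ‖w‖ < R → HasSum (fun n => c n * w ^ n) (f w)) {w : ℂ} (hw : ‖w‖ ≤ R) :
    HasSum (fun n => c n * w ^ n) (f w) := by
  have hbound : ∀ n, ∀ w ∈ Metric.closedBall (0 : ℂ) R, ‖c n * w ^ n‖ ≤ ‖c n‖ * R ^ n :=
    fun n w hw => by
      rw [norm_mul, norm_pow]
      have : ‖w‖ ≤ R := by simpa using hw
      gcongr
  have hw' : w ∈ Metric.closedBall (0 : ℂ) R := by simpa using hw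
  have hsum : Summable fun n => c n * w ^ n :=
    Summable.of_norm_bounded hc fun n => hbound n w hw'
  have heq : Set.EqOn (fun w => ∑' n, c n * w ^ n) f (Metric.closedBall 0 R) := by
    refine Set.EqOn.of_subset_closure (s := Metric.ball 0 R) ?_
      (continuousOn_tsum (fun n => by fun_prop) hc hbound) hf Metric.ball_subset_closedBall
      (closure_ball (0 : ℂ) hR.ne').ge
    intro w hw
    exact (hs w (by simpa using hw)).tsum_eq
  rw [← heq hw']
  exact hsum.hasSum

section DoubleSeries

variable {z : ℕ → ℕ → ℝ} {W : ℂ → ℂ → ℂ} {r r' R : ℝ}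

/-- Fiberwise form of a double power series with nonnegative coefficients. -/
theorem summable_and_hasSum_fiber (hr : 0 < r)
    (h : ∀ u : ℂ, ‖u‖ < r → ∀ v : ℂ, ‖v‖ < r' →
      HasSum (fun pq : ℕ × ℕ => (z pq.1 pq.2 : ℂ) * u ^ pq.1 * v ^ pq.2) (W u v))
    {v : ℂ} (hv : ‖v‖ < r') :
    (∀ p, Summable fun q => (z p q : ℂ) * v ^ q) ∧
      ∀ u : ℂ, ‖u‖ < r → HasSum (fun p => (∑' q, (z p q : ℂ) * v ^ q) * u ^ p) (W u v) := by
  have hsum : ∀ p, Summable fun q => (z p q : ℂ) * v ^ q := fun p => by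
    have hne : ((r / 2 : ℝ) : ℂ) ^ p ≠ 0 := pow_ne_zero _ (by exact_mod_cast (half_pos hr).ne')
    have h1 := (h ((r / 2 : ℝ) : ℂ) (by
      rw [Complex.norm_real, Real.norm_of_nonneg (half_pos hr).le]
      linarith) v hv).summable.prod_factor p
    refine (summable_mul_left_iff hne).mp (h1.congr fun q => ?_)
    ring
  refine ⟨hsum, fun u hu => ?_⟩
  have := (h u hu v hv).prod_fiberwise fun p => ((hsum p).hasSum.mul_left (u ^ p)).congr_fun
    fun q => by ring
  exact this.congr_fun fun p => by ring

theorem summable_double_of_fiber (hz : ∀ p q, 0 ≤ z p q) {s t : ℝ} (hs : 0 ≤ s) (ht : 0 ≤ t)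
    (hq : ∀ p, Summable fun q => z p q * t ^ q)
    (hp : Summable fun p => (∑' q, z p q * t ^ q) * s ^ p) {u v : ℂ} (hu : ‖u‖ ≤ s)
    (hv : ‖v‖ ≤ t) :
    Summable fun pq : ℕ × ℕ => (z pq.1 pq.2 : ℂ) * u ^ pq.1 * v ^ pq.2 := by
  have hreal : Summable fun pq : ℕ × ℕ => z pq.1 pq.2 * s ^ pq.1 * t ^ pq.2 := by
    rw [summable_prod_of_nonneg fun pq => by
      have := hz pq.1 pq.2; positivity]
    refine ⟨fun p => ((hq p).mul_left (s ^ p)).congr fun q => by ring, hp.congr fun p => ?_⟩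
    rw [mul_comm, ← tsum_mul_left]
    exact tsum_congr fun q => by ring
  refine Summable.of_norm_bounded hreal fun pq => ?_
  rw [norm_mul, norm_mul, norm_pow, norm_pow, Complex.norm_real, Real.norm_of_nonneg (hz _ _)]
  have := hz pq.1 pq.2
  gcongr

theorem ofReal_tsum_mul_pow (c : ℕ → ℝ) (t : ℝ) :
    ((∑' q, c q * t ^ q : ℝ) : ℂ) = ∑' q, (c q : ℂ) * (t : ℂ) ^ q := by
  rw [Complex.ofReal_tsum]
  simp

theorem summable_real_of_complex {c : ℕ → ℝ} {t : ℝ}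
    (h : Summable fun q => (c q : ℂ) * (t : ℂ) ^ q) : Summable fun q => c q * t ^ q := by
  rw [← Complex.summable_ofReal]
  simpa using h

theorem hasSum_double_extend (hz : ∀ p q, 0 ≤ z p q) (hr : 0 < r)
    (h : ∀ u : ℂ, ‖u‖ < r → ∀ v : ℂ, ‖v‖ < r' →
      HasSum (fun pq : ℕ × ℕ => (z pq.1 pq.2 : ℂ) * u ^ pq.1 * v ^ pq.2) (W u v))
    (hW : ∀ v : ℂ, ‖v‖ < r' → DifferentiableOn ℂ (fun u => W u v) (Metric.ball 0 R))
    {u : ℂ} (hu : ‖u‖ < R) {v : ℂ} (hv : ‖v‖ < r') :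
    HasSum (fun pq : ℕ × ℕ => (z pq.1 pq.2 : ℂ) * u ^ pq.1 * v ^ pq.2) (W u v) := by
  have hext : ∀ v : ℂ, ‖v‖ < r' → ∀ u : ℂ, ‖u‖ < R →
      HasSum (fun p => (∑' q, (z p q : ℂ) * v ^ q) * u ^ p) (W u v) := fun v hv u hu =>
    hasSum_of_differentiableOn_ball (hW v hv)
      (Filter.mem_of_superset (Metric.ball_mem_nhds (0 : ℂ) hr) fun w hw =>
        (summable_and_hasSum_fiber hr h hv).2 w (by simpa using hw)) hu
  have hnu : ‖((‖u‖ : ℝ) : ℂ)‖ = ‖u‖ := by simp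
  have hnv : ‖((‖v‖ : ℝ) : ℂ)‖ = ‖v‖ := by simp
  have hsum := summable_double_of_fiber hz (norm_nonneg u) (norm_nonneg v)
    (fun p => summable_real_of_complex ((summable_and_hasSum_fiber hr h (hnv.trans_lt hv)).1 p))
    (by
      refine summable_real_of_complex ?_
      simp only [ofReal_tsum_mul_pow]
      exact (hext _ (hnv.trans_lt hv) _ (hnu.trans_lt hu)).summable) le_rfl le_rfl
  have hfib := hsum.hasSum.prod_fiberwise fun p =>
    (((summable_and_hasSum_fiber hr h hv).1 p).hasSum.mul_left (u ^ p)).congr_fun fun q => by ring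
  have := (hfib.congr_fun fun p => by ring).unique (hext v hv u hu)
  rw [← this]
  exact hsum.hasSum

theorem hasSum_double_swap {S : ℂ} (u v : ℂ) :
    HasSum (fun pq : ℕ × ℕ => (z pq.1 pq.2 : ℂ) * u ^ pq.1 * v ^ pq.2) S ↔
      HasSum (fun pq : ℕ × ℕ => (z pq.2 pq.1 : ℂ) * v ^ pq.1 * u ^ pq.2) S := by
  rw [← (Equiv.prodComm ℕ ℕ).hasSum_iff]
  have : (fun pq : ℕ × ℕ => (z pq.1 pq.2 : ℂ) * u ^ pq.1 * v ^ pq.2) ∘ Equiv.prodComm ℕ ℕ =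
      fun pq : ℕ × ℕ => (z pq.2 pq.1 : ℂ) * v ^ pq.1 * u ^ pq.2 := by
    funext pq
    simp [mul_right_comm]
  rw [this]

/-- A double power series with nonnegative coefficients whose sum near the origin is given by a
function holomorphic in each variable on a disk, and continuous in the first one on the closed
disk, converges iteratedly to this function. -/
theorem eq_tsum_tsum_of_nonneg (hz : ∀ p q, 0 ≤ z p q) (hr : 0 < r) (hrR : r ≤ R)
    (h : ∀ u : ℂ, ‖u‖ < r → ∀ v : ℂ, ‖v‖ < r →
      HasSum (fun pq : ℕ × ℕ => (z pq.1 pq.2 : ℂ) * u ^ pq.1 * v ^ pq.2) (W u v))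
    (h1 : ∀ v : ℂ, ‖v‖ < R → DifferentiableOn ℂ (fun u => W u v) (Metric.ball 0 R))
    (h2 : ∀ u : ℂ, ‖u‖ < R → DifferentiableOn ℂ (fun v => W u v) (Metric.ball 0 R))
    (h3 : ∀ v : ℂ, ‖v‖ < R → ContinuousOn (fun u => W u v) (Metric.closedBall 0 R))
    {u : ℂ} (hu : ‖u‖ ≤ R) {v : ℂ} (hv : ‖v‖ < R) :
    W u v = ∑' q, (∑' p, (z p q : ℂ) * u ^ p) * v ^ q := by
  have hR : 0 < R := hr.trans_le hrR
  have hA : ∀ u : ℂ, ‖u‖ < R → ∀ v : ℂ, ‖v‖ < r →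
      HasSum (fun pq : ℕ × ℕ => (z pq.1 pq.2 : ℂ) * u ^ pq.1 * v ^ pq.2) (W u v) :=
    fun u hu v hv => hasSum_double_extend hz hr h (fun v hv => h1 v (hv.trans_le hrR)) hu hv
  have hB : ∀ u : ℂ, ‖u‖ < R → ∀ v : ℂ, ‖v‖ < R →
      HasSum (fun pq : ℕ × ℕ => (z pq.1 pq.2 : ℂ) * u ^ pq.1 * v ^ pq.2) (W u v) :=
    fun u hu v hv => (hasSum_double_swap u v).mpr <|
      hasSum_double_extend (z := fun p q => z q p) (W := fun v u => W u v)
        (fun p q => hz q p) hr (fun v hv u hu => (hasSum_double_swap u v).mp (hA u hu v hv)) h2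
        hv hu
  have hnv : ‖((‖v‖ : ℝ) : ℂ)‖ < R := by simpa using hv
  obtain ⟨hq, hp⟩ := summable_and_hasSum_fiber hR hB hnv
  have hq' := fun p => summable_real_of_complex (hq p)
  simp only [← ofReal_tsum_mul_pow] at hp
  have hpR := summable_mul_pow_of_continuousOn hR
    (fun p => tsum_nonneg fun q => mul_nonneg (hz p q) (by positivity)) (h3 _ hnv) hp
  have hsum := summable_double_of_fiber hz hR.le (norm_nonneg v) hq' hpR hu le_rfl
  obtain ⟨hqv, hpv⟩ := summable_and_hasSum_fiber hR hB hv
  have hle : ∀ p, ‖∑' q, (z p q : ℂ) * v ^ q‖ ≤ ∑' q, z p q * ‖v‖ ^ q := fun p => by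
    have hn : (fun q => ‖(z p q : ℂ) * v ^ q‖) = fun q => z p q * ‖v‖ ^ q := by
      funext q
      simp [abs_of_nonneg (hz p q)]
    have := norm_tsum_le_tsum_norm (f := fun q => (z p q : ℂ) * v ^ q) (by rw [hn]; exact hq' p)
    rwa [hn] at this
  have hW := hasSum_of_continuousOn_closedBall hR
    (Summable.of_nonneg_of_le (fun p => by positivity)
      (fun p => mul_le_mul_of_nonneg_right (hle p) (by positivity)) hpR) (h3 v hv) hpv hu
  calc W u v = ∑' p, (∑' q, (z p q : ℂ) * v ^ q) * u ^ p := hW.tsum_eq.symm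
    _ = ∑' p, ∑' q, (z p q : ℂ) * u ^ p * v ^ q := tsum_congr fun p => by
        rw [← tsum_mul_right]
        exact tsum_congr fun q => by ring
    _ = ∑' q, ∑' p, (z p q : ℂ) * u ^ p * v ^ q :=
        (Summable.tsum_comm (f := fun p q => (z p q : ℂ) * u ^ p * v ^ q) hsum).symm
    _ = ∑' q, (∑' p, (z p q : ℂ) * u ^ p) * v ^ q := tsum_congr fun q => tsum_mul_right

end DoubleSeries

theorem uc_pos : 0 < uc := by
  unfold uc tc
  positivity

theorem sqrt_seven_sq : ((Real.sqrt 7 : ℝ) : ℂ) ^ 2 = 7 := by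
  rw [← Complex.ofReal_pow, Real.sq_sqrt (by norm_num)]
  norm_num

theorem nuc_sq_sub_one : nuc ^ 2 - 1 = 4 * (7 + Real.sqrt 7) := by
  have := Real.sq_sqrt (show (0 : ℝ) ≤ 7 by norm_num)
  unfold nuc
  linear_combination 4 * this

theorem nuc_mul_tc : ((nuc : ℂ) ^ 2 - 1) * tc = 10 / 3 * uc := by
  have : (nuc ^ 2 - 1) * tc = 10 / 3 * uc := by
    rw [nuc_sq_sub_one, uc]
    ring
  have := congrArg Complex.ofReal this
  push_cast at this
  exact this

theorem nuc_mul_uc_sq : ((nuc : ℂ) ^ 2 - 1) * (uc : ℂ) ^ 2 = 9 / 10 := by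
  have : (nuc ^ 2 - 1) * uc ^ 2 = 9 / 10 := by
    have hm : 0 < 7 + Real.sqrt 7 := by positivity
    have h1 : ((7 + Real.sqrt 7) ^ ((3 : ℝ) / 2)) ^ 2 = (7 + Real.sqrt 7) ^ 3 := by
      rw [← Real.rpow_natCast, ← Real.rpow_mul hm.le, ← Real.rpow_natCast]
      norm_num
    rw [nuc_sq_sub_one, uc, tc, mul_pow, div_pow, mul_pow 8, h1, Real.sq_sqrt (by norm_num)]
    field_simp
    norm_num
  have := congrArg Complex.ofReal this
  push_cast at this
  exact this

theorem uhat_one_sub (h : ℂ) : uhat (1 - h) = uc * (1 - quartic h) := by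
  unfold uhat quartic
  ring

/-- The denominator of the rational parametrization of `Z`, in the variables `1 - H`, `1 - K`. -/
noncomputable def denPoly (h k : ℂ) : ℂ := k ^ 3 + (1 + h + h ^ 2) * (k ^ 2 + k + h)

/-- The numerator of the rational parametrization of `Z`, in the variables `1 - H`, `1 - K`. -/
noncomputable def numPoly (h k : ℂ) : ℂ :=
  (1 + h + h ^ 2 + 2 * h ^ 3 + h ^ 4) * (h + k + k ^ 2) + k ^ 3 * (1 + h + h ^ 2 + k)

/-- The rational parametrization of `Z`, in the variables `1 - H`, `1 - K`. -/
noncomputable def Zhat (h k : ℂ) : ℂ :=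
  Z0hat (1 - k) + 3 / 10 * (1 - quartic h) * (Real.sqrt 7 - numPoly h k / denPoly h k)

/-- The spurious factor common to both sides of the equation defining `Z`. -/
noncomputable def kernelPoly (H K : ℂ) : ℂ := H * K ^ 2 + (1 - 3 * H) * K + H ^ 2

theorem kernel_mul_sub_Zhat_eq_zero {h k Z : ℂ} (hh : 3 + 3 * h + 3 * h ^ 2 + h ^ 3 ≠ 0)
    (hk : 3 + 3 * k + 3 * k ^ 2 + k ^ 3 ≠ 0) (hF : denPoly h k ≠ 0)
    (heq : ((nuc : ℂ) * uhat (1 - k) * uhat (1 - h) - uhat (1 - h) ^ 2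
          - ((nuc : ℂ) ^ 2 - 1) * (tc : ℂ) * uhat (1 - k)
            * (Z0hat (1 - h) + uhat (1 - h) * Z1hat (1 - k))) * (Z - Z0hat (1 - k))
        = uhat (1 - h) ^ 2 * (Z0hat (1 - k) - Z0hat (1 - h))
          + ((nuc : ℂ) ^ 2 - 1) * uhat (1 - h) * uhat (1 - k)
            * (uhat (1 - h) ^ 2 - (tc : ℂ) * Z0hat (1 - h) * Z1hat (1 - k))) :
    kernelPoly (1 - h) (1 - k) * (Z - Zhat h k) = 0 := by
  have huc : (uc : ℂ) ≠ 0 := by exact_mod_cast uc_pos.ne'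
  have hs := sqrt_seven_sq
  have hν : (nuc : ℂ) = 1 + 2 * (Real.sqrt 7 : ℝ) := by simp [nuc]
  have hZ1 : uhat (1 - k) * Z1hat (1 - k) = 1 / 10 * (1 - k) *
      ((3 + 3 * k + 3 * k ^ 2 + k ^ 3) * (Real.sqrt 7 - k) - 3 * (2 + k + k ^ 2)) := by
    have : 10 - 12 * (1 - k) + 6 * (1 - k) ^ 2 - (1 - k) ^ 3 = 3 + 3 * k + 3 * k ^ 2 + k ^ 3 := by
      ring
    have hcancel := mul_div_cancel₀ (3 * (4 - 3 * (1 - k) + (1 - k) ^ 2)) hk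
    have huc' := mul_inv_cancel₀ huc
    rw [uhat, Z1hat, this]
    set X := 3 * (4 - 3 * (1 - k) + (1 - k) ^ 2) / (3 + 3 * k + 3 * k ^ 2 + k ^ 3)
    linear_combination (1 / 10 * (1 - k) * (3 + 3 * k + 3 * k ^ 2 + k ^ 3) *
      (Real.sqrt 7 - 1 + (1 - k) - X)) * huc' - 1 / 10 * (1 - k) * hcancel
  have hD : (nuc : ℂ) * uhat (1 - k) * uhat (1 - h) - uhat (1 - h) ^ 2
          - ((nuc : ℂ) ^ 2 - 1) * (tc : ℂ) * uhat (1 - k)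
            * (Z0hat (1 - h) + uhat (1 - h) * Z1hat (1 - k)) =
      -((uc : ℂ) ^ 2 / 9) * (3 + 3 * h + 3 * h ^ 2 + h ^ 3) * kernelPoly (1 - h) (1 - k)
        * denPoly h k := by
    have : ∀ V Z U : ℂ, ((nuc : ℂ) ^ 2 - 1) * (tc : ℂ) * V * (Z + U * Z1hat (1 - k)) =
        10 / 3 * uc * (V * Z + U * (V * Z1hat (1 - k))) := fun V Z U => by
      rw [← nuc_mul_tc]; ring
    rw [this, hZ1, hν]
    simp only [uhat, Z0hat, kernelPoly, denPoly]
    ring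
  have hN : uhat (1 - h) ^ 2 * (Z0hat (1 - k) - Z0hat (1 - h))
          + ((nuc : ℂ) ^ 2 - 1) * uhat (1 - h) * uhat (1 - k)
            * (uhat (1 - h) ^ 2 - (tc : ℂ) * Z0hat (1 - h) * Z1hat (1 - k)) =
      (uc : ℂ) ^ 2 / 90 * (3 + 3 * h + 3 * h ^ 2 + h ^ 3) ^ 2 * (1 - h)
        * kernelPoly (1 - h) (1 - k) * (numPoly h k - Real.sqrt 7 * denPoly h k) := by
    have e1 : ∀ V Z U : ℂ, ((nuc : ℂ) ^ 2 - 1) * U * V * (U ^ 2 - (tc : ℂ) * Z * Z1hat (1 - k)) =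
        ((nuc : ℂ) ^ 2 - 1) * U ^ 3 * V - 10 / 3 * uc * U * Z * (V * Z1hat (1 - k)) :=
      fun V Z U => by
      rw [← nuc_mul_tc]; ring
    have e2 : ((nuc : ℂ) ^ 2 - 1) * uhat (1 - h) ^ 3 * uhat (1 - k) = 9 / 10 * (uc : ℂ) ^ 2 *
        (1 - quartic h) ^ 3 * (1 - quartic k) := by
      rw [← nuc_mul_uc_sq, uhat_one_sub, uhat_one_sub]
      ring
    rw [e1, hZ1, e2]
    simp only [uhat, Z0hat, kernelPoly, denPoly, numPoly, quartic]
    linear_combination -(3 / 10) * (uc : ℂ) ^ 2 * (1 - h ^ 3 * (2 + h) / 3) ^ 2 *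
      (1 - k ^ 3 * (2 + k) / 3) * hs
  rw [hD, hN] at heq
  have hq : 3 * (1 - quartic h) = (1 - h) * (3 + 3 * h + 3 * h ^ 2 + h ^ 3) := by
    unfold quartic
    ring
  have hc : (uc : ℂ) ^ 2 / 9 * (3 + 3 * h + 3 * h ^ 2 + h ^ 3) * denPoly h k ≠ 0 :=
    mul_ne_zero (mul_ne_zero (div_ne_zero (pow_ne_zero 2 huc) (by norm_num)) hh) hF
  refine (mul_eq_zero_iff_left hc).mp ?_
  have hdiv : denPoly h k * (numPoly h k / denPoly h k) = numPoly h k := mul_div_cancel₀ _ hF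
  unfold Zhat
  linear_combination -heq
    + (uc : ℂ) ^ 2 / 9 * (3 + 3 * h + 3 * h ^ 2 + h ^ 3) * kernelPoly (1 - h) (1 - k) *
      (3 / 10 * (1 - quartic h)) * hdiv
    + (uc : ℂ) ^ 2 / 90 * (3 + 3 * h + 3 * h ^ 2 + h ^ 3) * kernelPoly (1 - h) (1 - k) *
      (numPoly h k - Real.sqrt 7 * denPoly h k) * hq

theorem one_mem_sector : (1 : ℂ) ∈ sector := by simp [sector]

theorem inv_mem_sector {h : ℂ} (hh : h ∈ sector) : h⁻¹ ∈ sector := by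
  obtain ⟨h1, h2⟩ := hh
  have hn : 0 < Complex.normSq h := Complex.normSq_pos.mpr fun h0 => by simp [h0] at h1
  refine ⟨by rw [Complex.inv_re]; positivity, ?_⟩
  rw [Complex.inv_re, Complex.inv_im, div_pow, div_pow, neg_sq, mul_div_assoc']
  gcongr

theorem re_mul_mul_pos {h k l : ℂ} (hh : h ∈ sector) (hk : k ∈ sector) (hl : l ∈ sector) :
    0 < (h * k * l).re := by
  have key : ∀ {h k : ℂ}, h ∈ sector → k ∈ sector → 3 * (h.im * k.im) < h.re * k.re := by
    rintro h k ⟨h1, h2⟩ ⟨k1, k2⟩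
    refine lt_of_pow_lt_pow_left₀ 2 (by positivity) ?_
    have : 3 * h.im ^ 2 * (3 * k.im ^ 2) < h.re ^ 2 * k.re ^ 2 :=
      mul_lt_mul'' h2 k2 (by positivity) (by positivity)
    linarith [this, show (3 * (h.im * k.im)) ^ 2 = 3 * h.im ^ 2 * (3 * k.im ^ 2) by ring,
      show (h.re * k.re) ^ 2 = h.re ^ 2 * k.re ^ 2 by ring]
  simp only [Complex.mul_re, Complex.mul_im]
  nlinarith [mul_lt_mul_of_pos_left (key hh hk) hl.1, mul_lt_mul_of_pos_left (key hh hl) hk.1,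
    mul_lt_mul_of_pos_left (key hk hl) hh.1]

theorem ne_zero_of_mem_sector {h : ℂ} (hh : h ∈ sector) : h ≠ 0 := fun h0 => by
  simpa [h0] using hh.1

theorem denPoly_ne_zero {h k : ℂ} (hh : h ∈ sector) (hk : k ∈ sector) : denPoly h k ≠ 0 := by
  have h0 := ne_zero_of_mem_sector hh
  have k0 := ne_zero_of_mem_sector hk
  have hh' := inv_mem_sector hh
  have hk' := inv_mem_sector hk
  have h1 := one_mem_sector
  have heq : denPoly h k * (h⁻¹ * k⁻¹) = k * k * h⁻¹ + 1 * k * h⁻¹ + 1 * 1 * h⁻¹ + 1 * 1 * k⁻¹ +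
      1 * 1 * k + 1 * 1 * 1 + 1 * h * k⁻¹ + 1 * h * k + 1 * 1 * h + h * h * k⁻¹ := by
    unfold denPoly
    field_simp
    ring
  have hpos : 0 < (denPoly h k * (h⁻¹ * k⁻¹)).re := by
    rw [heq]
    have := re_mul_mul_pos hk hk hh'
    have := re_mul_mul_pos h1 hk hh'
    have := re_mul_mul_pos h1 h1 hh'
    have := re_mul_mul_pos h1 h1 hk'
    have := re_mul_mul_pos h1 h1 hk
    have := re_mul_mul_pos h1 h1 h1
    have := re_mul_mul_pos h1 hh hk'
    have := re_mul_mul_pos h1 hh hk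
    have := re_mul_mul_pos h1 h1 hh
    have := re_mul_mul_pos hh hh hk'
    simp only [Complex.add_re]
    positivity
  intro hF
  simp [hF] at hpos

theorem cubic_ne_zero {h : ℂ} (hh : h ∈ sector) : 3 + 3 * h + 3 * h ^ 2 + h ^ 3 ≠ 0 := fun h0 => by
  have h1 := one_mem_sector
  have := re_mul_mul_pos h1 h1 hh
  have := re_mul_mul_pos h1 hh hh
  have := re_mul_mul_pos hh hh hh
  have h2 : 3 + 3 * (1 * 1 * h).re + 3 * (1 * h * h).re + (h * h * h).re = 0 := by
    rw [← Complex.zero_re, ← h0]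
    simp [pow_succ]
  linarith

theorem quadratic_ne_zero {h : ℂ} (hh : h ∈ insert 0 sector) : 1 + h + h ^ 2 ≠ 0 := by
  rcases hh with rfl | hh
  · simp
  intro h0
  have h1 := one_mem_sector
  have := re_mul_mul_pos h1 h1 hh
  have := re_mul_mul_pos h1 hh hh
  have h2 : 1 + (1 * 1 * h).re + (1 * h * h).re = 0 := by
    rw [← Complex.zero_re, ← h0]
    simp [pow_succ]
  linarith

theorem denPoly_zero_left_ne_zero {k : ℂ} (h0 : k ≠ 0) (hk : 1 + k + k ^ 2 ≠ 0) :
    denPoly 0 k ≠ 0 := by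
  have : denPoly 0 k = k * (1 + k + k ^ 2) := by
    unfold denPoly
    ring
  rw [this]
  exact mul_ne_zero h0 hk

theorem denPoly_ne_zero_of_mem_insert {h k : ℂ} (hh : h ∈ insert 0 sector) (hk : k ∈ sector) :
    denPoly h k ≠ 0 := by
  rcases hh with rfl | hh
  · exact denPoly_zero_left_ne_zero (ne_zero_of_mem_sector hk) (quadratic_ne_zero (Or.inr hk))
  · exact denPoly_ne_zero hh hk

theorem denPoly_zero_right_ne_zero {h : ℂ} (hh : h ∈ sector) : denPoly h 0 ≠ 0 := by
  have : denPoly h 0 = (1 + h + h ^ 2) * h := by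
    unfold denPoly
    ring
  rw [this]
  exact mul_ne_zero (quadratic_ne_zero (Or.inr hh)) (ne_zero_of_mem_sector hh)

theorem eventually_quadratic_ne_zero : ∀ᶠ k : ℂ in 𝓝 0, 1 + k + k ^ 2 ≠ 0 :=
  (by fun_prop : Continuous fun k : ℂ => 1 + k + k ^ 2).continuousAt.eventually_ne (by simp)

theorem continuous_denPoly (h : ℂ) : Continuous (denPoly h) := by
  unfold denPoly
  fun_prop

theorem eventually_denPoly_ne_zero {h : ℂ} (hh : h ∈ insert 0 sector) :
    ∀ᶠ k : ℂ in 𝓝[≠] 0, denPoly h k ≠ 0 := by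
  rcases hh with rfl | hh
  · filter_upwards [eventually_nhdsWithin_of_eventually_nhds eventually_quadratic_ne_zero,
      self_mem_nhdsWithin] with k hk h0 using denPoly_zero_left_ne_zero h0 hk
  · exact eventually_nhdsWithin_of_eventually_nhds
      ((continuous_denPoly h).continuousAt.eventually_ne (denPoly_zero_right_ne_zero hh))

theorem differentiableAt_Zhat_left {h k : ℂ} (hF : denPoly h k ≠ 0) :
    DifferentiableAt ℂ (fun h => Zhat h k) h := by
  have h1 : DifferentiableAt ℂ (fun h => denPoly h k) h := by
    unfold denPoly
    fun_prop
  have h2 : DifferentiableAt ℂ (fun h => numPoly h k) h := by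
    unfold numPoly
    fun_prop
  have h3 : DifferentiableAt ℂ quartic h := (hasDerivAt_quartic h).differentiableAt
  unfold Zhat
  fun_prop (disch := exact hF)

theorem differentiableAt_Zhat_right {h k : ℂ} (hF : denPoly h k ≠ 0) :
    DifferentiableAt ℂ (fun k => Zhat h k) k := by
  have h1 : DifferentiableAt ℂ (fun k => denPoly h k) k := by
    unfold denPoly
    fun_prop
  have h2 : DifferentiableAt ℂ (fun k => numPoly h k) k := by
    unfold numPoly
    fun_prop
  unfold Zhat Z0hat
  fun_prop (disch := exact hF)

theorem re_one_sub_div_pos {u : ℂ} (hu : ‖u‖ ≤ uc) (hne : u ≠ uc) : 0 < (1 - u / uc).re := by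
  have hlt : u.re < uc := by
    refine lt_of_le_of_ne ((Complex.re_le_norm u).trans hu) fun h => hne ?_
    have h1 : u.re = ‖u‖ := le_antisymm (Complex.re_le_norm u) (h ▸ hu)
    rw [← h, h1]
    exact (Complex.eq_coe_norm_of_nonneg (Complex.re_eq_norm.mp h1))
  rw [Complex.sub_re, Complex.div_ofReal_re, Complex.one_re, sub_pos, div_lt_one uc_pos]
  exact hlt

theorem one_sub_div_mem_slitPlane {v : ℂ} (hv : ‖v‖ < uc) : 1 - v / uc ∈ Complex.slitPlane := by
  refine Or.inl (re_one_sub_div_pos hv.le ?_)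
  rintro rfl
  simp [abs_of_pos uc_pos] at hv

theorem one_sub_div_eq_zero : 1 - (uc : ℂ) / uc = 0 := by
  rw [div_self (by exact_mod_cast uc_pos.ne'), sub_self]

namespace IsQuarticBranch

variable {κ : ℂ → ℂ}

theorem tendsto_zero (hκ : IsQuarticBranch κ) : Tendsto κ (𝓝[Complex.slitPlane] 0) (𝓝 0) := by
  rw [Metric.tendsto_nhdsWithin_nhds]
  intro ε hε
  refine ⟨2 / 3 * ε ^ 3, by positivity, fun y hy hd => ?_⟩
  rw [dist_zero_right] at hd ⊢
  refine lt_of_pow_lt_pow_left₀ 3 hε.le ((hκ.norm_pow_three_le hy).trans_lt ?_)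
  linarith

theorem continuousOn_insert_zero (hκ : IsQuarticBranch κ) :
    ContinuousOn κ (insert 0 Complex.slitPlane) := by
  rintro y (rfl | hy)
  · rw [continuousWithinAt_insert_self]
    unfold ContinuousWithinAt
    rw [hκ.map_zero]
    exact hκ.tendsto_zero
  · have := hκ.continuousOn.continuousAt (Complex.isOpen_slitPlane.mem_nhds hy)
    exact this.continuousWithinAt

theorem mem_sector_of_norm_lt (hκ : IsQuarticBranch κ) {u : ℂ} (hu : ‖u‖ < uc) :
    κ (1 - u / uc) ∈ sector := by
  refine hκ.mem_sector (re_one_sub_div_pos hu.le ?_)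
  rintro rfl
  simp [abs_of_pos uc_pos] at hu

theorem mem_insert_sector (hκ : IsQuarticBranch κ) {u : ℂ} (hu : ‖u‖ ≤ uc) :
    κ (1 - u / uc) ∈ insert 0 sector := by
  rcases eq_or_ne u uc with rfl | hne
  · rw [one_sub_div_eq_zero, hκ.map_zero]
    exact Set.mem_insert _ _
  · exact Or.inr (hκ.mem_sector (re_one_sub_div_pos hu hne))

theorem continuousOn_closedBall (hκ : IsQuarticBranch κ) :
    ContinuousOn (fun u : ℂ => κ (1 - u / uc)) (Metric.closedBall 0 uc) := by
  refine hκ.continuousOn_insert_zero.comp (by fun_prop) fun u hu => ?_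
  rcases eq_or_ne u uc with rfl | hne
  · rw [one_sub_div_eq_zero]
    exact Set.mem_insert _ _
  · exact Or.inr (Or.inl (re_one_sub_div_pos (by simpa using hu) hne))

theorem differentiableAt_comp (hκ : IsQuarticBranch κ) {v : ℂ}
    (hv : 1 - v / uc ∈ Complex.slitPlane) :
    DifferentiableAt ℂ (fun v : ℂ => κ (1 - v / uc)) v :=
  DifferentiableAt.comp (g := κ) (f := fun v : ℂ => 1 - v / uc) v
    (hκ.differentiableOn.differentiableAt (Complex.isOpen_slitPlane.mem_nhds hv)) (by fun_prop)

theorem uhat_apply (hκ : IsQuarticBranch κ) {v : ℂ} (hv : ‖v‖ < uc) :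
    uhat (1 - κ (1 - v / uc)) = v := by
  have huc : (uc : ℂ) ≠ 0 := by exact_mod_cast uc_pos.ne'
  rw [uhat_one_sub, hκ.quartic_apply _ (one_sub_div_mem_slitPlane hv)]
  field_simp
  ring

theorem eventually_norm_lt (hκ : IsQuarticBranch κ) {ρ : ℝ} (hρ : 0 < ρ) :
    ∀ᶠ v : ℂ in 𝓝 0, ‖1 - κ (1 - v / uc)‖ < ρ := by
  have hc : ContinuousAt (fun v : ℂ => ‖1 - κ (1 - v / uc)‖) 0 :=
    ((hκ.differentiableAt_comp (v := 0) (by simp)).continuousAt.const_sub 1).norm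
  exact hc.eventually_lt continuousAt_const (by simpa [hκ.map_one] using hρ)

end IsQuarticBranch

namespace IsQuarticBranch

variable {κ : ℂ → ℂ}

theorem differentiableOn_Zhat_left (hκ : IsQuarticBranch κ) {v : ℂ} (hv : ‖v‖ < uc) :
    DifferentiableOn ℂ (fun u : ℂ => Zhat (κ (1 - u / uc)) (κ (1 - v / uc)))
      (Metric.ball 0 uc) := fun u hu => by
  have hu : ‖u‖ < uc := by simpa using hu
  have hF := denPoly_ne_zero (hκ.mem_sector_of_norm_lt hu) (hκ.mem_sector_of_norm_lt hv)
  exact (DifferentiableAt.comp (g := fun h => Zhat h (κ (1 - v / uc)))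
    (f := fun u : ℂ => κ (1 - u / uc)) u (differentiableAt_Zhat_left hF)
    (hκ.differentiableAt_comp (one_sub_div_mem_slitPlane hu))).differentiableWithinAt

theorem continuousOn_Zhat_left (hκ : IsQuarticBranch κ) {v : ℂ} (hv : ‖v‖ < uc) :
    ContinuousOn (fun u : ℂ => Zhat (κ (1 - u / uc)) (κ (1 - v / uc)))
      (Metric.closedBall 0 uc) := fun u hu => by
  have hF := denPoly_ne_zero_of_mem_insert (hκ.mem_insert_sector (u := u) (by simpa using hu))
    (hκ.mem_sector_of_norm_lt hv)
  exact ContinuousAt.comp_continuousWithinAt (g := fun h => Zhat h (κ (1 - v / uc)))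
    (f := fun u : ℂ => κ (1 - u / uc)) (differentiableAt_Zhat_left hF).continuousAt
    (hκ.continuousOn_closedBall u hu)

theorem differentiableAt_Zhat_comp (hκ : IsQuarticBranch κ) {h v : ℂ}
    (hv : 1 - v / uc ∈ Complex.slitPlane) (hF : denPoly h (κ (1 - v / uc)) ≠ 0) :
    DifferentiableAt ℂ (fun v : ℂ => Zhat h (κ (1 - v / uc))) v :=
  DifferentiableAt.comp (g := fun k => Zhat h k) (f := fun v : ℂ => κ (1 - v / uc)) v
    (differentiableAt_Zhat_right hF) (hκ.differentiableAt_comp hv)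

theorem differentiableOn_Zhat_right (hκ : IsQuarticBranch κ) {u : ℂ} (hu : ‖u‖ < uc) :
    DifferentiableOn ℂ (fun v : ℂ => Zhat (κ (1 - u / uc)) (κ (1 - v / uc)))
      (Metric.ball 0 uc) := fun v hv => by
  have hv : ‖v‖ < uc := by simpa using hv
  exact (hκ.differentiableAt_Zhat_comp (one_sub_div_mem_slitPlane hv)
    (denPoly_ne_zero (hκ.mem_sector_of_norm_lt hu)
      (hκ.mem_sector_of_norm_lt hv))).differentiableWithinAt

theorem eventually_kernelPoly_ne_zero (hκ : IsQuarticBranch κ) (H : ℂ) :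
    ∀ᶠ v : ℂ in 𝓝[≠] 0, kernelPoly H (1 - κ (1 - v / uc)) ≠ 0 := by
  have hd : DifferentiableOn ℂ (fun v : ℂ => kernelPoly H (1 - κ (1 - v / uc)))
      (Metric.ball 0 uc) := fun v hv => by
    have hk : Differentiable ℂ fun k => kernelPoly H (1 - k) := by
      unfold kernelPoly
      fun_prop
    exact ((hk _).comp v (hκ.differentiableAt_comp
      (one_sub_div_mem_slitPlane (v := v) (by simpa using hv)))).differentiableWithinAt
  have han := hd.analyticAt (Metric.ball_mem_nhds (0 : ℂ) uc_pos)
  refine han.eventually_eq_zero_or_eventually_ne_zero.resolve_left fun hzero => ?_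
  have hH : H = 0 := by
    have := hzero.self_of_nhds
    simpa [kernelPoly, hκ.map_one] using this
  subst hH
  have hv : ∀ᶠ v : ℂ in 𝓝 0, v = 0 := by
    filter_upwards [hzero, Metric.ball_mem_nhds (0 : ℂ) uc_pos] with v hv hb
    have h1 : 1 - κ (1 - v / uc) = 0 := by simpa [kernelPoly] using hv
    have h2 := hκ.uhat_apply (v := v) (by simpa using hb)
    rw [← h2, h1]
    simp [uhat]
  obtain ⟨v, hv1, hv2⟩ := ((eventually_nhdsWithin_of_eventually_nhds hv).and
    (self_mem_nhdsWithin : {0}ᶜ ∈ 𝓝[≠] (0 : ℂ))).exists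
  exact hv2 hv1

/-- Near the origin the double series solving the functional equation is given by `Zhat`. -/
theorem exists_hasSum_Zhat (hκ : IsQuarticBranch κ) {ρ : ℝ} (hρ : 0 < ρ) {z : ℕ → ℕ → ℝ}
    (hZ : ∀ H K : ℂ, ‖H‖ < ρ → ‖K‖ < ρ → ∃ ZHK : ℂ,
      HasSum (fun pq : ℕ × ℕ => (z pq.1 pq.2 : ℂ) * uhat H ^ pq.1 * uhat K ^ pq.2) ZHK ∧
      ((nuc : ℂ) * uhat K * uhat H - uhat H ^ 2
          - ((nuc : ℂ) ^ 2 - 1) * (tc : ℂ) * uhat K * (Z0hat H + uhat H * Z1hat K))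
          * (ZHK - Z0hat K)
        = uhat H ^ 2 * (Z0hat K - Z0hat H)
          + ((nuc : ℂ) ^ 2 - 1) * uhat H * uhat K
            * (uhat H ^ 2 - (tc : ℂ) * Z0hat H * Z1hat K)) :
    ∃ r > 0, r ≤ uc ∧ ∀ u : ℂ, ‖u‖ < r → ∀ v : ℂ, ‖v‖ < r →
      HasSum (fun pq : ℕ × ℕ => (z pq.1 pq.2 : ℂ) * u ^ pq.1 * v ^ pq.2)
        (Zhat (κ (1 - u / uc)) (κ (1 - v / uc))) := by
  obtain ⟨r₀, hr₀, hlt⟩ := Metric.eventually_nhds_iff.mp (hκ.eventually_norm_lt hρ)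
  let ψ : ℂ → ℂ → ℂ := fun u v => ∑' pq : ℕ × ℕ, (z pq.1 pq.2 : ℂ) * u ^ pq.1 * v ^ pq.2
  have hr : 0 < min r₀ uc := lt_min hr₀ uc_pos
  have hsol : ∀ u : ℂ, ‖u‖ < min r₀ uc → ∀ v : ℂ, ‖v‖ < min r₀ uc →
      HasSum (fun pq : ℕ × ℕ => (z pq.1 pq.2 : ℂ) * u ^ pq.1 * v ^ pq.2) (ψ u v) ∧
      kernelPoly (1 - κ (1 - u / uc)) (1 - κ (1 - v / uc))
        * (ψ u v - Zhat (κ (1 - u / uc)) (κ (1 - v / uc))) = 0 := fun u hu v hv => by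
    have hu' := hu.trans_le (min_le_right _ _)
    have hv' := hv.trans_le (min_le_right _ _)
    have hus := hκ.mem_sector_of_norm_lt hu'
    have hvs := hκ.mem_sector_of_norm_lt hv'
    obtain ⟨Z, hZ1, hZ2⟩ := hZ (1 - κ (1 - u / uc)) (1 - κ (1 - v / uc))
      (hlt (by simpa using hu.trans_le (min_le_left _ _)))
      (hlt (by simpa using hv.trans_le (min_le_left _ _)))
    have hker := kernel_mul_sub_Zhat_eq_zero (cubic_ne_zero hus) (cubic_ne_zero hvs)
      (denPoly_ne_zero hus hvs) hZ2
    rw [hκ.uhat_apply hu', hκ.uhat_apply hv'] at hZ1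
    have hψ : ψ u v = Z := hZ1.tsum_eq
    rw [hψ]
    exact ⟨hZ1, hker⟩
  refine ⟨min r₀ uc, hr, min_le_right _ _, fun u hu v hv => ?_⟩
  have hswap := summable_and_hasSum_fiber (z := fun p q => z q p) (W := fun v u => ψ u v) hr
    (fun v hv u hu => (hasSum_double_swap u v).mp (hsol u hu v hv).1) hu
  have hev : ∀ᶠ v : ℂ in 𝓝 0, ‖v‖ < min r₀ uc :=
    Filter.mem_of_superset (Metric.ball_mem_nhds (0 : ℂ) hr) fun v hv => by simpa using hv
  have hψ := (hasFPowerSeriesAt_ofScalars (hev.mono hswap.2)).analyticAt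
  have hu' := hu.trans_le (min_le_right _ _)
  have hdiff := hκ.differentiableOn_Zhat_right hu'
  have heq := (hψ.frequently_eq_iff_eventually_eq
    (hdiff.analyticAt (Metric.ball_mem_nhds (0 : ℂ) uc_pos))).mp (by
      refine Filter.Eventually.frequently ?_
      filter_upwards [hκ.eventually_kernelPoly_ne_zero (1 - κ (1 - u / uc)),
        eventually_nhdsWithin_of_eventually_nhds hev] with v hker hv
      exact sub_eq_zero.mp ((mul_eq_zero.mp (hsol u hu v hv).2).resolve_left hker))
  have hZsum := hasSum_of_differentiableOn_ball hdiff
    (by filter_upwards [hev, heq] with v hv he using he ▸ hswap.2 v hv)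
    (hv.trans_le (min_le_right _ _))
  rw [hZsum.unique (hswap.2 v hv)]
  exact (hsol u hu v hv).1

/-- The coefficients `a` sum to `Ahat` on the closed disk. -/
theorem tsum_eq_Ahat (hκ : IsQuarticBranch κ) {ρ : ℝ} (hρ : 0 < ρ) {a : ℕ → ℝ}
    (ha : ∀ p, 0 ≤ a p)
    (hA : ∀ H : ℂ, ‖H‖ < ρ → HasSum (fun p : ℕ => (a p : ℂ) * uhat H ^ p) (Ahat H))
    {u : ℂ} (hu : ‖u‖ ≤ uc) :
    ∑' p, (a p : ℂ) * u ^ p = Ahat (1 - κ (1 - u / uc)) := by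
  have hAd : ∀ {h : ℂ}, h ∈ insert 0 sector → DifferentiableAt ℂ (fun h => Ahat (1 - h)) h := by
    intro h hh
    have : (3 - 3 * (1 - h) + (1 - h) ^ 2) ^ 2 ≠ 0 := by
      convert! pow_ne_zero 2 (quadratic_ne_zero hh) using 2
      ring
    unfold Ahat
    fun_prop (disch := exact this)
  have hd : DifferentiableOn ℂ (fun u : ℂ => Ahat (1 - κ (1 - u / uc))) (Metric.ball 0 uc) :=
    fun u hu => by
      have hu : ‖u‖ < uc := by simpa using hu
      exact (DifferentiableAt.comp (g := fun h => Ahat (1 - h))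
        (f := fun u : ℂ => κ (1 - u / uc)) u (hAd (Or.inr (hκ.mem_sector_of_norm_lt hu)))
        (hκ.differentiableAt_comp (one_sub_div_mem_slitPlane hu))).differentiableWithinAt
  have hc : ContinuousOn (fun u : ℂ => Ahat (1 - κ (1 - u / uc))) (Metric.closedBall 0 uc) :=
    fun u hu => ContinuousAt.comp_continuousWithinAt (g := fun h => Ahat (1 - h))
      (f := fun u : ℂ => κ (1 - u / uc))
      (hAd (hκ.mem_insert_sector (by simpa using hu))).continuousAt
      (hκ.continuousOn_closedBall u hu)
  have hs : ∀ w : ℂ, ‖w‖ < uc → HasSum (fun p => (a p : ℂ) * w ^ p) (Ahat (1 - κ (1 - w / uc))) :=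
    fun w hw => hasSum_of_differentiableOn_ball hd (by
      filter_upwards [hκ.eventually_norm_lt hρ, Metric.ball_mem_nhds (0 : ℂ) uc_pos] with v hv hb
      have := hA _ hv
      rwa [hκ.uhat_apply (by simpa using hb)] at this) hw
  have hsum := summable_mul_pow_of_continuousOn uc_pos ha hc hs
  refine (hasSum_of_continuousOn_closedBall uc_pos ?_ hc hs hu).tsum_eq
  simpa [abs_of_nonneg, ha] using hsum

end IsQuarticBranch

/-- The numerator of the remainder in the expansion of `Zhat h` at `0`. -/
noncomputable def remPoly (h k : ℂ) : ℂ :=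
  3 * (1 + h + h ^ 2) * h + h * (h ^ 2 + 2) * k - (1 - h) * k ^ 2

theorem Zhat_eq {h k : ℂ} (ha : 1 + h + h ^ 2 ≠ 0) (hF : denPoly h k ≠ 0) :
    Zhat h k = 3 / 10 * (2 + Real.sqrt 7) + 3 / 10 * (1 - quartic h) *
        (Real.sqrt 7 - (1 + h + h ^ 2 + 2 * h ^ 3 + h ^ 4) / (1 + h + h ^ 2))
      + (-(3 / 10) * (2 + Real.sqrt 7) +
        9 / 20 * (1 - (1 - quartic h) * (1 + 2 * h) / (1 + h + h ^ 2) ^ 2)) * quartic k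
      + 3 / 20 * (4 + 2 * h + 3 * h ^ 2) / (1 + h + h ^ 2) ^ 2 * k ^ 4
      + k ^ 5 * (3 / 10 * (1 + k / 3) + 3 / 10 * (1 - quartic h) / (1 + h + h ^ 2) ^ 2 *
        (remPoly h k / denPoly h k)) := by
  have hN : numPoly h k / denPoly h k = (1 + h + h ^ 2 + 2 * h ^ 3 + h ^ 4) / (1 + h + h ^ 2) +
      k ^ 3 * ((1 + 2 * h) + (h - 1) * k) / (1 + h + h ^ 2) ^ 2 -
      k ^ 5 / (1 + h + h ^ 2) ^ 2 * (remPoly h k / denPoly h k) := by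
    field_simp
    unfold numPoly denPoly remPoly
    ring
  rw [Zhat, hN, Z0hat]
  generalize remPoly h k / denPoly h k = R
  unfold quartic
  field_simp
  ring

theorem isBigO_remPoly_div {h : ℂ} (hh : h ∈ insert 0 sector) :
    (fun k => remPoly h k / denPoly h k) =O[𝓝[≠] 0] fun _ => (1 : ℂ) := by
  rcases hh with rfl | hh
  · have hc : ContinuousAt (fun k : ℂ => -k / (1 + k + k ^ 2)) 0 :=
      ContinuousAt.div (by fun_prop) (by fun_prop) (by simp)
    refine ((hc.tendsto.isBigO_one ℂ).mono nhdsWithin_le_nhds).congr' ?_ EventuallyEq.rfl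
    filter_upwards [eventually_nhdsWithin_of_eventually_nhds eventually_quadratic_ne_zero,
      self_mem_nhdsWithin] with k hk h0
    have h0' : k ≠ 0 := h0
    have hF := denPoly_zero_left_ne_zero h0' hk
    rw [div_eq_div_iff hk hF]
    unfold denPoly remPoly
    ring
  · have hc : ContinuousAt (fun k => remPoly h k / denPoly h k) 0 :=
      ContinuousAt.div (by unfold remPoly; fun_prop) (continuous_denPoly h).continuousAt
        (denPoly_zero_right_ne_zero hh)
    exact (hc.tendsto.isBigO_one ℂ).mono nhdsWithin_le_nhds

theorem isBigO_one_sub_cpow :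
    (fun k : ℂ => 1 - ((((3 : ℝ) / 2) ^ ((4 : ℝ) / 3) : ℝ) : ℂ) *
      (((2 + k) / 3) ^ (1 / 3 : ℂ)) ^ 4) =O[𝓝 0] fun k => k := by
  set f : ℂ → ℂ := fun k => 1 - ((((3 : ℝ) / 2) ^ ((4 : ℝ) / 3) : ℝ) : ℂ) *
    (((2 + k) / 3) ^ (1 / 3 : ℂ)) ^ 4
  have hslit : (2 + (0 : ℂ)) / 3 ∈ Complex.slitPlane := by
    have : (2 + (0 : ℂ)) / 3 = ((2 / 3 : ℝ) : ℂ) := by simp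
    rw [this, Complex.ofReal_mem_slitPlane]
    norm_num
  have hd : DifferentiableAt ℂ f 0 := by
    have : DifferentiableAt ℂ (fun k : ℂ => ((2 + k) / 3) ^ (1 / 3 : ℂ)) 0 :=
      DifferentiableAt.cpow_const (f := fun k : ℂ => (2 + k) / 3) (by fun_prop) hslit
    fun_prop
  have h0 : f 0 = 0 := by
    have h1 : ((2 + (0 : ℂ)) / 3) ^ (1 / 3 : ℂ) = (((2 / 3 : ℝ) ^ (1 / 3 : ℝ) : ℝ) : ℂ) := by
      rw [Complex.ofReal_cpow (by norm_num)]
      simp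
    have h2 : ((3 : ℝ) / 2) ^ ((4 : ℝ) / 3) * ((2 / 3 : ℝ) ^ (1 / 3 : ℝ)) ^ 4 = 1 := by
      rw [← Real.rpow_natCast, ← Real.rpow_mul (by norm_num),
        show (1 / 3 : ℝ) * ((4 : ℕ) : ℝ) = 4 / 3 by norm_num,
        ← Real.mul_rpow (by norm_num) (by norm_num)]
      norm_num
    simp only [f, h1]
    rw [← Complex.ofReal_pow, ← Complex.ofReal_mul, h2]
    simp
  simpa [h0] using hd.isBigO_sub

theorem Ahat_one_sub (h : ℂ) : Ahat (1 - h) =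
    3 / 20 * (4 + 2 * h + 3 * h ^ 2) / (1 + h + h ^ 2) ^ 2 *
      ((((3 : ℝ) / 2) ^ ((4 : ℝ) / 3) : ℝ) : ℂ) := by
  have h1 : ((3 : ℝ) / 2) ^ ((7 : ℝ) / 3) = 3 / 2 * ((3 : ℝ) / 2) ^ ((4 : ℝ) / 3) := by
    rw [show (7 : ℝ) / 3 = 1 + 4 / 3 by norm_num, Real.rpow_add (by norm_num), Real.rpow_one]
  rw [Ahat, h1, show 3 - 3 * (1 - h) + (1 - h) ^ 2 = 1 + h + h ^ 2 by ring,
    show 9 - 8 * (1 - h) + 3 * (1 - h) ^ 2 = 4 + 2 * h + 3 * h ^ 2 by ring]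
  generalize ((3 : ℝ) / 2) ^ ((4 : ℝ) / 3) = c
  push_cast
  ring

theorem exists_Zhat_expansion {h : ℂ} (hh : h ∈ insert 0 sector) :
    ∃ α γ : ℂ, (fun k => Zhat h k - (α + γ * quartic k +
      Ahat (1 - h) * (k * ((2 + k) / 3) ^ (1 / 3 : ℂ)) ^ 4)) =O[𝓝[≠] 0] fun k => k ^ 5 := by
  have ha := quadratic_ne_zero hh
  refine ⟨3 / 10 * (2 + Real.sqrt 7) + 3 / 10 * (1 - quartic h) *
        (Real.sqrt 7 - (1 + h + h ^ 2 + 2 * h ^ 3 + h ^ 4) / (1 + h + h ^ 2)),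
      -(3 / 10) * (2 + Real.sqrt 7) +
        9 / 20 * (1 - (1 - quartic h) * (1 + 2 * h) / (1 + h + h ^ 2) ^ 2), ?_⟩
  have hrem : (fun k => 3 / 10 * (1 + k / 3) + 3 / 10 * (1 - quartic h) / (1 + h + h ^ 2) ^ 2 *
        (remPoly h k / denPoly h k)) =O[𝓝[≠] 0] fun _ => (1 : ℂ) := by
    have hc : ContinuousAt (fun k : ℂ => 3 / 10 * (1 + k / 3)) 0 := by fun_prop
    exact ((hc.tendsto.isBigO_one ℂ).mono nhdsWithin_le_nhds).add
      ((isBigO_remPoly_div hh).const_mul_left _)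
  have hpow : (fun k => 3 / 20 * (4 + 2 * h + 3 * h ^ 2) / (1 + h + h ^ 2) ^ 2 *
      (k ^ 4 * (1 - ((((3 : ℝ) / 2) ^ ((4 : ℝ) / 3) : ℝ) : ℂ) *
        (((2 + k) / 3) ^ (1 / 3 : ℂ)) ^ 4))) =O[𝓝[≠] 0] fun k : ℂ => k ^ 4 * k :=
    (((Asymptotics.isBigO_refl _ _).mul isBigO_one_sub_cpow).const_mul_left _).mono
      nhdsWithin_le_nhds
  have hsum := (hpow.congr_right fun k => (pow_succ k 4).symm).add
    ((((Asymptotics.isBigO_refl (fun k : ℂ => k ^ 5) (𝓝[≠] 0)).mul hrem)).congr_right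
      fun k => mul_one _)
  refine hsum.congr' ?_ EventuallyEq.rfl
  filter_upwards [eventually_denPoly_ne_zero hh] with k hF
  rw [Zhat_eq ha hF, Ahat_one_sub]
  ring

theorem cpow_four_thirds (y : ℂ) : y ^ ((4 : ℂ) / 3) = (y ^ (1 / 3 : ℂ)) ^ 4 := by
  rw [← Complex.cpow_nat_mul]
  congr 1
  norm_num

theorem isOpen_slitDisk (x ε : ℝ) : IsOpen (slitDisk x ε) :=
  Metric.isOpen_ball.sdiff (isCompact_Icc.image Complex.continuous_ofReal).isClosed

theorem one_sub_div_mem_slitPlane_of_mem_slitDisk {ε : ℝ} {v : ℂ} (hv : v ∈ slitDisk uc ε) :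
    1 - v / uc ∈ Complex.slitPlane := by
  by_contra hcon
  rw [Complex.mem_slitPlane_iff_not_le_zero, not_not, Complex.le_def] at hcon
  obtain ⟨h1, h2⟩ := hcon
  rw [Complex.sub_re, Complex.div_ofReal_re, Complex.one_re, Complex.zero_re, sub_nonpos,
    one_le_div uc_pos] at h1
  have h3 : v.im = 0 := by
    rw [Complex.sub_im, Complex.div_ofReal_im, Complex.one_im, Complex.zero_im, zero_sub,
      neg_eq_zero, div_eq_zero_iff] at h2
    exact h2.resolve_right uc_pos.ne'
  have hvn : ‖v‖ < uc + ε := by simpa using hv.1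
  exact hv.2 ⟨v.re, ⟨h1, (Complex.re_le_norm v).trans hvn.le⟩, Complex.ext rfl h3.symm⟩

theorem norm_one_sub_div_sq_le {ε : ℝ} {v : ℂ} (hv : ‖v‖ < uc + ε)
    (hre : (1 - v / uc).re ≤ 0) : uc ^ 2 * ‖1 - v / uc‖ ^ 2 ≤ 2 * uc * ε + ε ^ 2 := by
  have huc := uc_pos
  have h1 : uc ≤ v.re := by
    rwa [Complex.sub_re, Complex.div_ofReal_re, Complex.one_re, sub_nonpos,
      one_le_div uc_pos] at hre
  have h2 : uc ^ 2 * ‖1 - v / uc‖ ^ 2 = (uc - v.re) ^ 2 + v.im ^ 2 := by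
    rw [Complex.sq_norm, Complex.normSq_apply, Complex.sub_re, Complex.sub_im,
      Complex.div_ofReal_re, Complex.div_ofReal_im, Complex.one_re, Complex.one_im]
    field_simp
    ring
  have h3 : ‖v‖ ^ 2 = v.re ^ 2 + v.im ^ 2 := by
    rw [Complex.sq_norm, Complex.normSq_apply]
    ring
  have h4 : ‖v‖ ^ 2 < (uc + ε) ^ 2 := by gcongr
  rw [h2]
  nlinarith

namespace IsQuarticBranch

variable {κ : ℂ → ℂ}

theorem exists_slitDisk (hκ : IsQuarticBranch κ) {h : ℂ} (hh : h ∈ insert 0 sector) :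
    ∃ ε > 0, ∀ v ∈ slitDisk uc ε, denPoly h (κ (1 - v / uc)) ≠ 0 := by
  have huc := uc_pos
  obtain ⟨δ, hδ, hF⟩ := Metric.eventually_nhds_iff.mp
    (eventually_nhdsWithin_iff.mp (eventually_denPoly_ne_zero hh))
  obtain ⟨η, hη, hηδ⟩ : ∃ η > 0, 3 / 2 * η ≤ δ ^ 3 := ⟨2 / 3 * δ ^ 3, by positivity, by linarith⟩
  refine ⟨min uc (uc * η ^ 2 / 4), by positivity, fun v hv => ?_⟩
  have hslit := one_sub_div_mem_slitPlane_of_mem_slitDisk hv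
  rcases lt_or_ge 0 (1 - v / uc).re with hre | hre
  · exact denPoly_ne_zero_of_mem_insert hh (hκ.mem_sector hre)
  set ε := min uc (uc * η ^ 2 / 4)
  have hε : 0 < ε := by positivity
  have h1 := norm_one_sub_div_sq_le (by simpa using hv.1) hre
  have h2 : ε ≤ uc := min_le_left _ _
  have h3 : ε ≤ uc * η ^ 2 / 4 := min_le_right _ _
  have h4 : ‖1 - v / uc‖ < η := by
    refine lt_of_pow_lt_pow_left₀ 2 hη.le ?_
    have h5 : uc ^ 2 * ‖1 - v / uc‖ ^ 2 < uc ^ 2 * η ^ 2 := by nlinarith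
    exact lt_of_mul_lt_mul_left h5 (by positivity)
  refine hF ?_ (hκ.ne_zero hslit)
  rw [dist_zero_right]
  refine lt_of_pow_lt_pow_left₀ 3 hδ.le ((hκ.norm_pow_three_le hslit).trans_lt ?_)
  linarith

theorem tendsto_slitDisk (hκ : IsQuarticBranch κ) (ε : ℝ) :
    Tendsto (fun v : ℂ => κ (1 - v / uc)) (𝓝[slitDisk uc ε] (uc : ℂ)) (𝓝[≠] 0) := by
  refine tendsto_nhdsWithin_iff.mpr ⟨hκ.tendsto_zero.comp ?_, ?_⟩
  · refine tendsto_nhdsWithin_iff.mpr ⟨?_, ?_⟩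
    · have hc : Continuous fun v : ℂ => 1 - v / uc := by fun_prop
      have := hc.tendsto uc
      rw [one_sub_div_eq_zero] at this
      exact this.mono_left nhdsWithin_le_nhds
    · filter_upwards [self_mem_nhdsWithin] with v hv
        using one_sub_div_mem_slitPlane_of_mem_slitDisk hv
  · filter_upwards [self_mem_nhdsWithin] with v hv
      using hκ.ne_zero (one_sub_div_mem_slitPlane_of_mem_slitDisk hv)

theorem isBigO_pow_five (hκ : IsQuarticBranch κ) (ε : ℝ) :
    (fun v : ℂ => κ (1 - v / uc) ^ 5) =O[𝓝[slitDisk uc ε] (uc : ℂ)]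
      fun v : ℂ => ‖1 - v / uc‖ ^ ((5 : ℝ) / 3) := by
  refine Asymptotics.IsBigO.of_bound ((3 / 2 : ℝ) ^ ((5 : ℝ) / 3)) ?_
  filter_upwards [self_mem_nhdsWithin] with v hv
  have h1 := hκ.norm_pow_three_le (one_sub_div_mem_slitPlane_of_mem_slitDisk hv)
  have h2 : ‖κ (1 - v / uc)‖ ^ 5 = (‖κ (1 - v / uc)‖ ^ 3) ^ ((5 : ℝ) / 3) := by
    rw [← Real.rpow_natCast, ← Real.rpow_natCast, ← Real.rpow_mul (norm_nonneg _)]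
    norm_num
  rw [norm_pow, h2, Real.norm_of_nonneg (by positivity),
    ← Real.mul_rpow (by norm_num) (norm_nonneg _)]
  exact Real.rpow_le_rpow (by positivity) h1 (by norm_num)

end IsQuarticBranch

/-- for each `|u| ≤ u_c`, the function `Z_u(v) = Σ_q (Σ_p z_{p,q} u^p) v^q`
extends analytically to a slit disk at `u_c`, and there are constants `α(u), β(u)` with
`Z_u(v) = α(u) − β(u)(u_c − v) + A(u)(1 − v/u_c)^{4/3} + O((1 − v/u_c)^{5/3})`
as `v → u_c` within the slit disk (principal branch powers). -/
theorem statement7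
    (ρ : ℝ) (hρ : 0 < ρ)
    (z : ℕ → ℕ → ℝ) (hz_nonneg : ∀ p q, 0 ≤ z p q)
    -- `z p 0` are the Taylor coefficients of `Z₀ = Ẑ₀ ∘ û⁻¹` at `0`
    (hz0 : ∀ H : ℂ, ‖H‖ < ρ →
      HasSum (fun p : ℕ => (z p 0 : ℂ) * uhat H ^ p) (Z0hat H))
    -- `z p q` are the Taylor coefficients at `(0,0)` of the solution `Z(u,v)` of the
    -- algebraic equation, expressed through the parametrization `u = û(H)`, `v = û(K)`
    (hZ : ∀ H K : ℂ, ‖H‖ < ρ → ‖K‖ < ρ → ∃ ZHK : ℂ,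
      HasSum (fun pq : ℕ × ℕ => (z pq.1 pq.2 : ℂ) * uhat H ^ pq.1 * uhat K ^ pq.2) ZHK ∧
      ((nuc : ℂ) * uhat K * uhat H - uhat H ^ 2
          - ((nuc : ℂ) ^ 2 - 1) * (tc : ℂ) * uhat K * (Z0hat H + uhat H * Z1hat K))
          * (ZHK - Z0hat K)
        = uhat H ^ 2 * (Z0hat K - Z0hat H)
          + ((nuc : ℂ) ^ 2 - 1) * uhat H * uhat K * (uhat H ^ 2 - (tc : ℂ) * Z0hat H * Z1hat K))
    (a : ℕ → ℝ) (ha_pos : ∀ p, 0 < a p)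
    -- `a p` are the Taylor coefficients of `A = Â ∘ û⁻¹` at `0`
    (hA : ∀ H : ℂ, ‖H‖ < ρ →
      HasSum (fun p : ℕ => (a p : ℂ) * uhat H ^ p) (Ahat H))
    :
    ∀ u : ℂ, ‖u‖ ≤ uc →
      ∃ (g : ℂ → ℂ) (ε : ℝ), 0 < ε ∧
        (∀ w ∈ slitDisk uc ε, AnalyticAt ℂ g w) ∧
        (∀ v : ℂ, ‖v‖ < uc →
          g v = ∑' q : ℕ, (∑' p : ℕ, (z p q : ℂ) * u ^ p) * v ^ q) ∧
        ∃ α β : ℂ, Asymptotics.IsBigO (nhdsWithin ((uc : ℝ) : ℂ) (slitDisk uc ε))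
          (fun v : ℂ => g v - (α - β * (((uc : ℝ) : ℂ) - v)
            + (∑' p : ℕ, (a p : ℂ) * u ^ p) * (1 - v / ((uc : ℝ) : ℂ)) ^ ((4 : ℂ)/3)))
          (fun v : ℂ => ‖1 - v / ((uc : ℝ) : ℂ)‖ ^ ((5:ℝ)/3)) := by
  obtain ⟨κ, hκ⟩ := exists_isQuarticBranch
  obtain ⟨r, hr, hruc, hloc⟩ := hκ.exists_hasSum_Zhat hρ hZ
  intro u hu
  have hh := hκ.mem_insert_sector hu
  obtain ⟨ε, hε, hF⟩ := hκ.exists_slitDisk hh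
  have hd : DifferentiableOn ℂ (fun v : ℂ => Zhat (κ (1 - u / uc)) (κ (1 - v / uc)))
      (slitDisk uc ε) := fun v hv =>
    (hκ.differentiableAt_Zhat_comp (one_sub_div_mem_slitPlane_of_mem_slitDisk hv)
      (hF v hv)).differentiableWithinAt
  obtain ⟨α, γ, hexp⟩ := exists_Zhat_expansion hh
  refine ⟨fun v => Zhat (κ (1 - u / uc)) (κ (1 - v / uc)), ε, hε,
    fun w hw => hd.analyticAt ((isOpen_slitDisk uc ε).mem_nhds hw), fun v hv => ?_,
    α, -γ / uc, ?_⟩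
  · exact eq_tsum_tsum_of_nonneg (W := fun u v => Zhat (κ (1 - u / uc)) (κ (1 - v / uc)))
      hz_nonneg hr hruc hloc (fun v hv => hκ.differentiableOn_Zhat_left hv)
      (fun u hu => hκ.differentiableOn_Zhat_right hu)
      (fun v hv => hκ.continuousOn_Zhat_left hv) hu hv
  · rw [hκ.tsum_eq_Ahat hρ (fun p => (ha_pos p).le) hA hu]
    refine ((hexp.comp_tendsto (hκ.tendsto_slitDisk ε)).trans (hκ.isBigO_pow_five ε)).congr' ?_
      EventuallyEq.rfl
    filter_upwards [self_mem_nhdsWithin] with v hv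
    have hslit := one_sub_div_mem_slitPlane_of_mem_slitDisk hv
    have huc : (uc : ℂ) ≠ 0 := by exact_mod_cast uc_pos.ne'
    have hlin : -γ / uc * (uc - v) = -(γ * (1 - v / uc)) := by
      field_simp
    simp only [Function.comp_apply]
    rw [hκ.quartic_apply _ hslit, ← hκ.cpow_third_eq hslit, cpow_four_thirds, hlin]
    ring
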